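/- Let φ : X → Y be a Lipschitz map between metric measure spaces where X carries the measure ℋ^ν and Y the measure ℋ^{ν̃}, with ν ≥ ν̃. If A ⊆ X satisfies ℋ^ν(A) = 0, then ∫_Y ℋ^{ν−ν̃}(φ^{-1}(t) ∩ A) dℋ^{ν̃}(t) = 0; i.e., for ℋ^{ν̃}-almost every t ∈ Y, the level set slice φ^{-1}(t) ∩ A has ℋ^{ν−ν̃}-measure zero. -/

import Mathlib

open MeasureTheory

open scoped Classical in
lemma cov_fin {Y : Type*} (S : ℕ → Set Y) (d : ℕ → ℝ) (hd : ∀ i, 0 ≤ d i)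
    (g : ℕ → ℝ) (hg : ∀ i, 0 ≤ g i) :
    ∀ n : ℕ, ∀ I : Finset ℕ, I.card = n → ∀ a : ℕ → ℝ, (∀ i ∈ I, 0 < a i) →
      (∀ i ∈ I, (S i).Nonempty) → ∀ c : ℝ, 0 < c →
      ∃ J : Finset ℕ,
        (∀ y, c ≤ ∑ i ∈ I, (if y ∈ S i then a i else 0) →
          ∃ j ∈ J, ∃ i, y ∈ S i ∧ (S i ∩ S j).Nonempty ∧ d i ≤ 2 * d j) ∧
        c * ∑ j ∈ J, g j ≤ ∑ i ∈ I, a i * g i := by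
  intro n
  induction n using Nat.strong_induction_on with
  | _ n ih =>
  intro I hI a ha hne c hc
  rcases I.eq_empty_or_nonempty with rfl | hIne
  · refine ⟨∅, ?_, by simp⟩
    intro y hy
    simp at hy
    linarith
  obtain ⟨u, huI, hdis, hcov⟩ := Vitali.exists_disjoint_subfamily_covering_enlargement S (I : Set ℕ)
    d 2 (by norm_num) (fun i _ => hd i) (∑ i ∈ I, d i)
    (fun i hi => Finset.single_le_sum (f := d) (fun j _ => hd j) hi) hne
  obtain ⟨J0, rfl⟩ : ∃ J0 : Finset ℕ, (J0 : Set ℕ) = u :=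
    ⟨(I.finite_toSet.subset huI).toFinset, by simp⟩
  have hJI : J0 ⊆ I := by exact_mod_cast huI
  have hJne : J0.Nonempty := by
    obtain ⟨i, hi⟩ := hIne
    obtain ⟨b, hb, _⟩ := hcov i hi
    exact ⟨b, hb⟩
  -- the family `J0` covers whatever is covered by `I`
  have hcov0 : ∀ y, c ≤ ∑ i ∈ I, (if y ∈ S i then a i else 0) →
      ∃ j ∈ J0, ∃ i, y ∈ S i ∧ (S i ∩ S j).Nonempty ∧ d i ≤ 2 * d j := by
    intro y hy
    by_contra hcon
    have : ∀ i ∈ I, y ∉ S i := by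
      intro i hi hyi
      obtain ⟨b, hb, h1, h2⟩ := hcov i hi
      exact hcon ⟨b, hb, i, hyi, h1, h2⟩
    rw [Finset.sum_eq_zero (fun i hi => by simp [this i hi])] at hy
    linarith
  obtain ⟨j0, hj0, hmin⟩ := J0.exists_min_image a hJne
  have ht0 : 0 < a j0 := ha _ (hJI hj0)
  by_cases htc : c ≤ a j0
  · refine ⟨J0, hcov0, ?_⟩
    rw [Finset.mul_sum]
    calc ∑ j ∈ J0, c * g j ≤ ∑ j ∈ J0, a j * g j :=
          Finset.sum_le_sum fun j hj => mul_le_mul_of_nonneg_right (htc.trans (hmin j hj)) (hg j)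
      _ ≤ _ := Finset.sum_le_sum_of_subset_of_nonneg hJI
          fun i hi _ => mul_nonneg (ha i hi).le (hg i)
  push Not at htc
  set t := a j0 with ht
  let a' : ℕ → ℝ := fun i => a i - if i ∈ J0 then t else 0
  have ha'0 : ∀ i ∈ I, 0 ≤ a' i := by
    intro i hi
    by_cases h : i ∈ J0
    · simpa [a', h] using hmin i h
    · simpa [a', h] using (ha i hi).le
  let I' := I.filter fun i => a' i ≠ 0
  have hlt : I'.card < n := by
    rw [← hI]
    apply Finset.card_lt_card
    refine Finset.filter_ssubset.2 ⟨j0, hJI hj0, ?_⟩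
    simp [a', hj0, ht]
  obtain ⟨J1, hJ1, hJ1s⟩ := ih _ hlt I' rfl a'
    (fun i hi => lt_of_le_of_ne (ha'0 i (Finset.mem_filter.1 hi).1)
      (Finset.mem_filter.1 hi).2.symm)
    (fun i hi => hne i (Finset.mem_filter.1 hi).1) (c - t) (by linarith)
  have hsum : ∑ i ∈ I', a' i * g i = ∑ i ∈ I, a i * g i - t * ∑ j ∈ J0, g j := by
    have h1 : ∑ i ∈ I', a' i * g i = ∑ i ∈ I, a' i * g i := by
      apply Finset.sum_subset (Finset.filter_subset _ _)
      intro i hi hi'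
      have : a' i = 0 := by
        by_contra h
        exact hi' (Finset.mem_filter.2 ⟨hi, h⟩)
      simp [this]
    rw [h1]
    simp only [a', sub_mul, Finset.sum_sub_distrib, ite_mul, zero_mul]
    rw [← Finset.sum_filter, Finset.filter_mem_eq_inter, Finset.inter_eq_right.2 hJI,
      Finset.mul_sum]
  rw [hsum] at hJ1s
  by_cases hcmp : ∑ j ∈ J0, g j ≤ ∑ j ∈ J1, g j
  · refine ⟨J0, hcov0, ?_⟩
    have := mul_le_mul_of_nonneg_left hcmp (by linarith : 0 ≤ c - t)
    linarith
  · refine ⟨J1, ?_, ?_⟩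
    · intro y hy
      apply hJ1
      have h1 : ∑ i ∈ I', (if y ∈ S i then a' i else 0) = ∑ i ∈ I, (if y ∈ S i then a' i else 0) := by
        apply Finset.sum_subset (Finset.filter_subset _ _)
        intro i hi hi'
        have : a' i = 0 := by
          by_contra h
          exact hi' (Finset.mem_filter.2 ⟨hi, h⟩)
        simp [this]
      have h2 : ∑ i ∈ I, (if y ∈ S i then a' i else 0) = ∑ i ∈ I, (if y ∈ S i then a i else 0)
          - ∑ i ∈ J0, (if y ∈ S i then t else 0) := by
        have h3 : ∑ i ∈ J0, (if y ∈ S i then t else 0)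
            = ∑ i ∈ I, (if i ∈ J0 then (if y ∈ S i then t else 0) else 0) := by
          rw [← Finset.sum_filter (fun i => i ∈ J0), Finset.filter_mem_eq_inter,
            Finset.inter_eq_right.2 hJI]
        rw [h3, ← Finset.sum_sub_distrib]
        refine Finset.sum_congr rfl fun i _ => ?_
        by_cases h : y ∈ S i <;> simp [a', h]
      have h4 : ∑ i ∈ J0, (if y ∈ S i then t else 0) ≤ t := by
        by_cases hex : ∃ i ∈ J0, y ∈ S i
        · obtain ⟨i, hi, hyi⟩ := hex
          rw [Finset.sum_eq_single_of_mem i hi]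
          · simp [hyi]
          · intro b hb hbi
            have : y ∉ S b := fun hyb =>
              Set.disjoint_left.1 (hdis hb hi hbi) hyb hyi
            simp [this]
        · push Not at hex
          rw [Finset.sum_eq_zero (fun i hi => by simp [hex i hi])]
          exact ht0.le
      rw [h1, h2]
      linarith
    · push Not at hcmp
      have := mul_le_mul_of_nonneg_left hcmp.le ht0.le
      linarith

open scoped Classical ENNReal NNReal in
lemma cov_fin' {Y : Type*} [EMetricSpace Y] (S : ℕ → Set Y) (d a : ℕ → ℝ≥0)
    (hS : ∀ i, Metric.ediam (S i) ≤ d i) (δ : ℝ≥0) (hδ : ∀ i, d i ≤ δ) (s : ℝ) (hs : 0 ≤ s)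
    (c : ℝ≥0) (hc : 0 < c) (I : Finset ℕ) (r : ℝ≥0∞) (hr : 5 * (δ : ℝ≥0∞) ≤ r) :
    OuterMeasure.mkMetric'.pre (fun A : Set Y => Metric.ediam A ^ s) r
      {y | (c : ℝ≥0∞) ≤ ∑ i ∈ I, (if y ∈ S i then (a i : ℝ≥0∞) else 0)} ≤
      5 ^ s * (c : ℝ≥0∞)⁻¹ * ∑ i ∈ I, (a i : ℝ≥0∞) * (d i : ℝ≥0∞) ^ s := by
  let I' := I.filter fun i => 0 < a i ∧ (S i).Nonempty
  obtain ⟨J, hJ, hJs⟩ := cov_fin S (fun i => (d i : ℝ)) (fun i => (d i).2)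
    (fun i => ((d i ^ s : ℝ≥0) : ℝ)) (fun i => (d i ^ s).2) _ I' rfl (fun i => (a i : ℝ))
    (fun i hi => by exact_mod_cast (Finset.mem_filter.1 hi).2.1)
    (fun i hi => (Finset.mem_filter.1 hi).2.2) (c : ℝ) (by exact_mod_cast hc)
  let T : ℕ → Set Y := fun j => {y | ∃ i, y ∈ S i ∧ (S i ∩ S j).Nonempty ∧ (d i : ℝ) ≤ 2 * d j}
  have hT : ∀ j, Metric.ediam (T j) ≤ 5 * (d j : ℝ≥0∞) := by
    intro j
    apply Metric.ediam_le
    have key : ∀ i, (d i : ℝ) ≤ 2 * d j → Metric.ediam (S i) ≤ 2 * (d j : ℝ≥0∞) := by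
      intro i h
      refine (hS i).trans ?_
      exact_mod_cast h
    rintro x ⟨i, hxi, ⟨p, hpi, hpj⟩, hi⟩ y ⟨k, hyk, ⟨q, hqk, hqj⟩, hk⟩
    calc edist x y ≤ edist x p + edist p q + edist q y := edist_triangle4 _ _ _ _
      _ ≤ 2 * (d j : ℝ≥0∞) + d j + 2 * (d j : ℝ≥0∞) := by
          gcongr
          · exact (Metric.edist_le_ediam_of_mem hxi hpi).trans (key i hi)
          · exact (Metric.edist_le_ediam_of_mem hpj hqj).trans (hS j)
          · exact (Metric.edist_le_ediam_of_mem hqk hyk).trans (key k hk)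
      _ = 5 * (d j : ℝ≥0∞) := by ring
  have hsub : {y | (c : ℝ≥0∞) ≤ ∑ i ∈ I, (if y ∈ S i then (a i : ℝ≥0∞) else 0)} ⊆
      ⋃ j ∈ J, T j := by
    intro y hy
    have h1 : ∑ i ∈ I', (if y ∈ S i then a i else 0) = ∑ i ∈ I, (if y ∈ S i then a i else 0) := by
      apply Finset.sum_subset (Finset.filter_subset _ _)
      intro i hi hi'
      by_cases h : y ∈ S i
      · have : ¬ (0 < a i) := fun h0 => hi' (Finset.mem_filter.2 ⟨hi, h0, ⟨y, h⟩⟩)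
        simpa [h] using this
      · simp [h]
    have h2 : c ≤ ∑ i ∈ I', (if y ∈ S i then a i else 0) := by
      rw [h1]
      have hy' : (c : ℝ≥0∞) ≤ ∑ i ∈ I, (if y ∈ S i then (a i : ℝ≥0∞) else 0) := hy
      have e1 : ∑ i ∈ I, (if y ∈ S i then (a i : ℝ≥0∞) else 0)
          = ((∑ i ∈ I, (if y ∈ S i then a i else 0) : ℝ≥0) : ℝ≥0∞) := by
        rw [ENNReal.ofNNReal_finsetSum]
        refine Finset.sum_congr rfl fun i _ => ?_
        split_ifs <;> simp
      rw [e1] at hy'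
      exact_mod_cast hy'
    obtain ⟨j, hj, i, hi⟩ := hJ y (by
      have e2 : ∑ i ∈ I', (if y ∈ S i then (a i : ℝ) else 0)
          = ((∑ i ∈ I', (if y ∈ S i then a i else 0) : ℝ≥0) : ℝ) := by
        rw [NNReal.coe_sum]
        refine Finset.sum_congr rfl fun i _ => ?_
        split_ifs <;> simp
      rw [e2]
      exact_mod_cast h2)
    exact Set.mem_biUnion hj ⟨i, hi⟩
  have hJs' : (c : ℝ≥0∞) * ∑ j ∈ J, (d j : ℝ≥0∞) ^ s ≤ ∑ i ∈ I, (a i : ℝ≥0∞) * (d i : ℝ≥0∞) ^ s := by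
    have h3 : c * ∑ j ∈ J, d j ^ s ≤ ∑ i ∈ I', a i * d i ^ s := by exact_mod_cast hJs
    have h4 : ∑ i ∈ I', a i * d i ^ s ≤ ∑ i ∈ I, a i * d i ^ s :=
      Finset.sum_le_sum_of_subset (Finset.filter_subset _ _)
    have h5 := h3.trans h4
    simp only [← ENNReal.coe_rpow_of_nonneg _ hs]
    exact_mod_cast h5
  have hc0 : (c : ℝ≥0∞) ≠ 0 := by exact_mod_cast hc.ne'
  calc _ ≤ OuterMeasure.mkMetric'.pre (fun A : Set Y => Metric.ediam A ^ s) r (⋃ j ∈ J, T j) :=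
        measure_mono hsub
    _ ≤ ∑ j ∈ J, OuterMeasure.mkMetric'.pre (fun A : Set Y => Metric.ediam A ^ s) r (T j) :=
        measure_biUnion_finset_le _ _
    _ ≤ ∑ j ∈ J, 5 ^ s * (d j : ℝ≥0∞) ^ s := by
        refine Finset.sum_le_sum fun j _ => ?_
        refine (OuterMeasure.mkMetric'.pre_le ((hT j).trans (le_trans ?_ hr))).trans ?_
        · gcongr
          exact_mod_cast hδ j
        · rw [← ENNReal.mul_rpow_of_nonneg _ _ hs]
          exact ENNReal.rpow_le_rpow (hT j) hs
    _ = 5 ^ s * (c : ℝ≥0∞)⁻¹ * ((c : ℝ≥0∞) * ∑ j ∈ J, (d j : ℝ≥0∞) ^ s) := by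
        rw [← Finset.mul_sum, mul_assoc, ← mul_assoc _ (c : ℝ≥0∞),
          ENNReal.inv_mul_cancel hc0 ENNReal.coe_ne_top, one_mul]
    _ ≤ _ := by gcongr

open scoped Classical ENNReal NNReal in
lemma cov_count {Y : Type*} [EMetricSpace Y] (S : ℕ → Set Y) (d a : ℕ → ℝ≥0)
    (hS : ∀ i, Metric.ediam (S i) ≤ d i) (δ : ℝ≥0) (hδ : ∀ i, d i ≤ δ) (s : ℝ) (hs : 0 ≤ s)
    (c : ℝ≥0) (hc : 0 < c) (r : ℝ≥0∞) (hr : 5 * (δ : ℝ≥0∞) ≤ r)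
    (ε : ℝ≥0) (hε : 0 < ε) (hsum : ∑' i, (a i : ℝ≥0∞) * (d i : ℝ≥0∞) ^ s ≤ ε) :
    OuterMeasure.mkMetric'.pre (fun A : Set Y => Metric.ediam A ^ s) r
      {y | (c : ℝ≥0∞) ≤ ∑' i, (if y ∈ S i then (a i : ℝ≥0∞) else 0)} ≤
      5 ^ s * (c : ℝ≥0∞)⁻¹ * 8 * ε := by
  set w : ℕ → ℝ≥0∞ := fun i => (a i : ℝ≥0∞) * (d i : ℝ≥0∞) ^ s with hw
  have htail : ∀ j : ℕ, ∀ᶠ k in Filter.atTop, ∑' i, w (i + k) ≤ ε * (4⁻¹ : ℝ≥0∞) ^ (j + 1) := by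
    intro j
    have h1 := ENNReal.tendsto_sum_nat_add w (ne_top_of_le_ne_top ENNReal.coe_ne_top hsum)
    refine h1.eventually_le_const ?_
    have : (ε : ℝ≥0∞) ≠ 0 := by exact_mod_cast hε.ne'
    have h4 : (4⁻¹ : ℝ≥0∞) ^ (j + 1) ≠ 0 := pow_ne_zero _ (by simp)
    exact pos_iff_ne_zero.2 (mul_ne_zero this h4)
  obtain ⟨k, hk, hkt⟩ := Filter.extraction_forall_of_eventually htail
  let N : ℕ → ℕ := fun j => Nat.casesOn j 0 k
  have hN0 : N 0 = 0 := rfl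
  have hNmono : Monotone N := by
    apply monotone_nat_of_le_succ
    intro j
    cases j with
    | zero => exact Nat.zero_le _
    | succ j => exact (hk (Nat.lt_succ_self j)).le
  have hNid : Filter.Tendsto N Filter.atTop Filter.atTop := by
    rw [← Filter.tendsto_add_atTop_iff_nat 1]
    exact hk.tendsto_atTop
  have hNt : ∀ j, ∑' i, w (i + N j) ≤ ε * (4⁻¹ : ℝ≥0∞) ^ j := by
    intro j
    cases j with
    | zero => simpa [N] using hsum
    | succ j => exact hkt j
  have hblock : ∀ j, ∑ i ∈ Finset.Ico (N j) (N (j + 1)), w i ≤ ε * (4⁻¹ : ℝ≥0∞) ^ j := by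
    intro j
    refine le_trans ?_ (hNt j)
    rw [Finset.sum_Ico_eq_sum_range]
    simp only [add_comm (N j)]
    exact ENNReal.sum_le_tsum _
  let B : ℕ → Set Y := fun j => {y | ((c * 4⁻¹ * 2⁻¹ ^ j : ℝ≥0) : ℝ≥0∞) ≤
    ∑ i ∈ Finset.Ico (N j) (N (j + 1)), (if y ∈ S i then (a i : ℝ≥0∞) else 0)}
  have hgeo : ∑' j : ℕ, (2⁻¹ : ℝ≥0∞) ^ j = 2 := by
    rw [ENNReal.tsum_geometric, ENNReal.one_sub_inv_two, inv_inv]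
  have hsub : {y | (c : ℝ≥0∞) ≤ ∑' i, (if y ∈ S i then (a i : ℝ≥0∞) else 0)} ⊆ ⋃ j, B j := by
    intro y hy
    by_contra hcon
    simp only [Set.mem_iUnion, not_exists, B, Set.mem_ofPred_eq, not_le] at hcon
    have hy' : (c : ℝ≥0∞) ≤ ∑' i, (if y ∈ S i then (a i : ℝ≥0∞) else 0) := hy
    have hpart : ∀ j, ∑ i ∈ Finset.range (N j), (if y ∈ S i then (a i : ℝ≥0∞) else 0) =
        ∑ l ∈ Finset.range j, ∑ i ∈ Finset.Ico (N l) (N (l + 1)),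
          (if y ∈ S i then (a i : ℝ≥0∞) else 0) := by
      intro j
      induction j with
      | zero => simp [hN0]
      | succ j ih =>
        rw [Finset.sum_range_succ, ← ih, Finset.sum_range_add_sum_Ico _ (hNmono (Nat.le_succ j))]
    have hle : ∑' i, (if y ∈ S i then (a i : ℝ≥0∞) else 0) ≤ (c : ℝ≥0∞) * 4⁻¹ * 2 := by
      rw [ENNReal.tsum_eq_iSup_nat' hNid]
      refine iSup_le fun j => ?_
      rw [hpart, ← hgeo, ← ENNReal.tsum_mul_left]
      refine le_trans (Finset.sum_le_sum fun l _ => ?_) (ENNReal.sum_le_tsum (Finset.range j))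
      refine (hcon l).le.trans (le_of_eq ?_)
      push_cast
      rfl
    have h9 : (c : ℝ≥0∞) ≤ ((c * 4⁻¹ * 2 : ℝ≥0) : ℝ≥0∞) := by
      refine (hy'.trans hle).trans (le_of_eq ?_)
      push_cast
      rfl
    have h10 : c ≤ c * 4⁻¹ * 2 := by exact_mod_cast h9
    have h11 : (c : ℝ) ≤ c * 4⁻¹ * 2 := by exact_mod_cast h10
    have h12 : (0 : ℝ) < c := by exact_mod_cast hc
    linarith
  calc _ ≤ OuterMeasure.mkMetric'.pre (fun A : Set Y => Metric.ediam A ^ s) r (⋃ j, B j) :=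
        measure_mono hsub
    _ ≤ ∑' j, OuterMeasure.mkMetric'.pre (fun A : Set Y => Metric.ediam A ^ s) r (B j) :=
        measure_iUnion_le _
    _ ≤ ∑' j : ℕ, 5 ^ s * (c : ℝ≥0∞)⁻¹ * 4 * ε * (2⁻¹ : ℝ≥0∞) ^ j := by
        refine ENNReal.tsum_le_tsum fun j => ?_
        have hcj : 0 < c * 4⁻¹ * 2⁻¹ ^ j := by positivity
        refine (cov_fin' S d a hS δ hδ s hs (c * 4⁻¹ * 2⁻¹ ^ j) hcj
          (Finset.Ico (N j) (N (j + 1))) r hr).trans ?_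
        have e1 : (((c * 4⁻¹ * 2⁻¹ ^ j : ℝ≥0) : ℝ≥0∞))⁻¹ * (4⁻¹ : ℝ≥0∞) ^ j
            = (c : ℝ≥0∞)⁻¹ * 4 * (2⁻¹ : ℝ≥0∞) ^ j := by
          have e2 : (4⁻¹ : ℝ≥0∞) = ((4⁻¹ : ℝ≥0) : ℝ≥0∞) := by
            rw [ENNReal.coe_inv (by norm_num)]; rfl
          have e3 : (2⁻¹ : ℝ≥0∞) = ((2⁻¹ : ℝ≥0) : ℝ≥0∞) := by
            rw [ENNReal.coe_inv (by norm_num)]; rfl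
          have e4 : (4 : ℝ≥0∞) = ((4 : ℝ≥0) : ℝ≥0∞) := rfl
          rw [← ENNReal.coe_inv hcj.ne', e2, e3, e4, ← ENNReal.coe_inv hc.ne']
          norm_cast
          have e5 : (4⁻¹ : ℝ≥0) ^ j = 2⁻¹ ^ j * 2⁻¹ ^ j := by
            rw [← mul_pow]; congr 1; rw [← mul_inv]; norm_num
          rw [e5]
          have : (2⁻¹ : ℝ≥0) ^ j ≠ 0 := by positivity
          field_simp
        calc _ ≤ 5 ^ s * (((c * 4⁻¹ * 2⁻¹ ^ j : ℝ≥0) : ℝ≥0∞))⁻¹ * (ε * (4⁻¹ : ℝ≥0∞) ^ j) := by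
              gcongr
              exact hblock j
          _ = 5 ^ s * ε * ((((c * 4⁻¹ * 2⁻¹ ^ j : ℝ≥0) : ℝ≥0∞))⁻¹ * (4⁻¹ : ℝ≥0∞) ^ j) := by ring
          _ = 5 ^ s * ε * ((c : ℝ≥0∞)⁻¹ * 4 * (2⁻¹ : ℝ≥0∞) ^ j) := by rw [e1]
          _ = _ := by ring
          _ ≤ _ := le_rfl
    _ = _ := by
        rw [ENNReal.tsum_mul_left, hgeo]
        ring

open scoped Classical ENNReal NNReal in
lemma slice_null {X Y : Type*}
    [EMetricSpace X] [MeasurableSpace X] [BorelSpace X] [EMetricSpace Y]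
    (φ : X → Y) (K : ℝ≥0) (hφ : LipschitzWith K φ)
    (nu nut : ℝ) (hnut : 0 ≤ nut) (hle : nut ≤ nu)
    (A : Set X) (hA : Measure.hausdorffMeasure nu A = 0)
    (c ρ : ℝ≥0) (hc : 0 < c) (hρ : 0 < ρ) (r : ℝ≥0∞) (hr : 0 < r) :
    OuterMeasure.mkMetric'.pre (fun A : Set Y => Metric.ediam A ^ nut) r
      {t | (c : ℝ≥0∞) ≤ OuterMeasure.mkMetric'.pre
        (fun A : Set X => Metric.ediam A ^ (nu - nut)) ρ (φ ⁻¹' {t} ∩ A)} = 0 := by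
  have hp : 0 ≤ nu - nut := by linarith
  obtain ⟨r', hr'0, hr'⟩ : ∃ r' : ℝ≥0, 0 < r' ∧ (r' : ℝ≥0∞) ≤ r := by
    obtain ⟨q, hq0, hq⟩ := ENNReal.lt_iff_exists_nnreal_btwn.1 hr
    exact ⟨q, by exact_mod_cast hq0, hq.le⟩
  let δ : ℝ≥0 := min ρ (r' / (5 * (K + 1)))
  have hδ0 : 0 < δ := lt_min hρ (by positivity)
  have hδr : 5 * ((K * δ : ℝ≥0) : ℝ≥0∞) ≤ r := by
    refine le_trans ?_ hr'
    have : 5 * (K * δ) ≤ r' := by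
      calc 5 * (K * δ) ≤ 5 * ((K + 1) * (r' / (5 * (K + 1)))) := by
            gcongr
            · exact le_self_add
            · exact min_le_right _ _
        _ = r' := by field_simp
    exact_mod_cast this
  have hC : (5 : ℝ≥0∞) ^ nut * (c : ℝ≥0∞)⁻¹ * 8 * ((K : ℝ≥0∞) ^ nut + 1) ≠ ∞ := by
    have h1 : (5 : ℝ≥0∞) ^ nut ≠ ∞ := ENNReal.rpow_ne_top_of_nonneg hnut (by simp)
    have h2 : (K : ℝ≥0∞) ^ nut ≠ ∞ := ENNReal.rpow_ne_top_of_nonneg hnut (by simp)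
    have h3 : (c : ℝ≥0∞)⁻¹ ≠ ∞ := by simpa using hc.ne'
    refine ENNReal.mul_ne_top (ENNReal.mul_ne_top (ENNReal.mul_ne_top h1 h3) (by simp)) ?_
    exact ENNReal.add_ne_top.2 ⟨h2, by simp⟩
  have main : ∀ ε : ℝ≥0, 0 < ε → OuterMeasure.mkMetric'.pre
      (fun A : Set Y => Metric.ediam A ^ nut) r
      {t | (c : ℝ≥0∞) ≤ OuterMeasure.mkMetric'.pre
        (fun A : Set X => Metric.ediam A ^ (nu - nut)) ρ (φ ⁻¹' {t} ∩ A)} ≤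
      (5 : ℝ≥0∞) ^ nut * (c : ℝ≥0∞)⁻¹ * 8 * ((K : ℝ≥0∞) ^ nut + 1) * ε := by
    intro ε hε
    rw [Measure.hausdorffMeasure_apply] at hA
    have hA1 : (⨅ (t : ℕ → Set X) (_ : A ⊆ ⋃ n, t n) (_ : ∀ n, Metric.ediam (t n) ≤ (δ : ℝ≥0∞)),
          ∑' n, ⨆ _ : (t n).Nonempty, Metric.ediam (t n) ^ nu) < ε := by
      have h0 : (0 : ℝ≥0∞) < δ := by exact_mod_cast hδ0
      have h1 := ENNReal.iSup_eq_zero.1 (ENNReal.iSup_eq_zero.1 hA δ) h0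
      rw [h1]
      exact_mod_cast hε
    simp only [iInf_lt_iff] at hA1
    obtain ⟨E, hAE, hEδ, hEs⟩ := hA1
    have hEtop : ∀ i, Metric.ediam (E i) ≠ ∞ := fun i =>
      ne_top_of_le_ne_top ENNReal.coe_ne_top (hEδ i)
    let e : ℕ → ℝ≥0 := fun i => (Metric.ediam (E i)).toNNReal
    have he : ∀ i, (e i : ℝ≥0∞) = Metric.ediam (E i) := fun i => ENNReal.coe_toNNReal (hEtop i)
    let a : ℕ → ℝ≥0 := fun i => if (E i).Nonempty then e i ^ (nu - nut) else 0
    let ε' : ℝ≥0 := (K ^ nut + 1) * ε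
    have hε' : 0 < ε' := by positivity
    have hcov := cov_count (fun i => φ '' E i) (fun i => K * e i) a ?_ (K * δ) ?_ nut hnut c hc r
      hδr ε' hε' ?_
    · refine le_trans (measure_mono ?_) (hcov.trans (le_of_eq ?_))
      · intro t ht
        have ht' : (c : ℝ≥0∞) ≤ OuterMeasure.mkMetric'.pre
          (fun A : Set X => Metric.ediam A ^ (nu - nut)) ρ (φ ⁻¹' {t} ∩ A) := ht
        refine ht'.trans ?_
        have hsub : φ ⁻¹' {t} ∩ A ⊆ ⋃ i, (φ ⁻¹' {t} ∩ E i) := by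
          rw [← Set.inter_iUnion]
          exact Set.inter_subset_inter_right _ hAE
        refine (measure_mono hsub).trans ((measure_iUnion_le _).trans ?_)
        refine ENNReal.tsum_le_tsum fun i => ?_
        by_cases h : t ∈ φ '' E i
        · rw [if_pos h]
          have hne : (E i).Nonempty := by
            obtain ⟨x, hx, _⟩ := h
            exact ⟨x, hx⟩
          have hd : Metric.ediam (φ ⁻¹' {t} ∩ E i) ≤ Metric.ediam (E i) :=
            Metric.ediam_mono Set.inter_subset_right
          refine (OuterMeasure.mkMetric'.pre_le (hd.trans ((hEδ i).trans ?_))).trans ?_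
          · exact_mod_cast min_le_left _ _
          · simp only [a, if_pos hne]
            rw [ENNReal.coe_rpow_of_nonneg _ hp, he]
            exact ENNReal.rpow_le_rpow hd hp
        · have : φ ⁻¹' {t} ∩ E i = ∅ := by
            ext x
            simp only [Set.mem_inter_iff, Set.mem_preimage, Set.mem_singleton_iff,
              Set.mem_empty_iff_false, iff_false]
            rintro ⟨h1, h2⟩
            exact h ⟨x, h2, h1⟩
          rw [this]
          simp
      · simp only [ε']
        push_cast
        rw [ENNReal.coe_rpow_of_nonneg _ hnut]
        ring
    · intro i
      refine (hφ.ediam_image_le (E i)).trans ?_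
      push_cast
      rw [he]
    · intro i
      have : e i ≤ δ := by
        have := hEδ i
        rw [← he] at this
        exact_mod_cast this
      gcongr
    · calc _ ≤ ∑' i, (K : ℝ≥0∞) ^ nut * (⨆ _ : (E i).Nonempty, Metric.ediam (E i) ^ nu) := by
            refine ENNReal.tsum_le_tsum fun i => ?_
            by_cases hne : (E i).Nonempty
            · simp only [a, if_pos hne, hne, iSup_pos]
              push_cast
              rw [ENNReal.coe_rpow_of_nonneg _ hp, he, ENNReal.mul_rpow_of_nonneg _ _ hnut]
              have : Metric.ediam (E i) ^ nu
                  = Metric.ediam (E i) ^ (nu - nut) * Metric.ediam (E i) ^ nut := by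
                rw [← ENNReal.rpow_add_of_nonneg _ _ hp hnut, sub_add_cancel]
              rw [this]
              exact le_of_eq (by ring)
            · simp [a, hne]
        _ ≤ (K : ℝ≥0∞) ^ nut * ε := by
            rw [ENNReal.tsum_mul_left]
            gcongr
        _ ≤ ε' := by
            simp only [ε']
            push_cast
            rw [ENNReal.coe_rpow_of_nonneg _ hnut]
            gcongr
            exact le_self_add
  set C := (5 : ℝ≥0∞) ^ nut * (c : ℝ≥0∞)⁻¹ * 8 * ((K : ℝ≥0∞) ^ nut + 1) with hCdef
  refine le_antisymm ?_ bot_le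
  refine le_of_forall_gt_imp_ge_of_dense fun η hη => ?_
  obtain ⟨q, hq0, hq⟩ := ENNReal.exists_nnreal_pos_mul_lt hC hη.ne'
  refine (main q hq0).trans ?_
  rw [mul_comm]
  exact hq.le

/-- Consequence of the Eilenberg (coarea) inequality: if `φ` is Lipschitz and
`A` is `ℋ^ν`-null, then for `ℋ^ν̃`-almost every `t` the slice `φ⁻¹(t) ∩ A` is
`ℋ^{ν−ν̃}`-null; equivalently, the integral of the slice measures vanishes. -/
theorem stmt_17 {X Y : Type*}
    [EMetricSpace X] [MeasurableSpace X] [BorelSpace X]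
    [EMetricSpace Y] [MeasurableSpace Y] [BorelSpace Y]
    (φ : X → Y) (K : NNReal) (hφ : LipschitzWith K φ)
    (nu nut : ℝ) (hnut : 0 ≤ nut) (hle : nut ≤ nu)
    (A : Set X) (hA : Measure.hausdorffMeasure nu A = 0) :
    ∫⁻ t, Measure.hausdorffMeasure (nu - nut) (φ ⁻¹' {t} ∩ A)
        ∂(Measure.hausdorffMeasure nut : Measure Y) = 0 := by
  have hX : ∀ B : Set X, Measure.hausdorffMeasure (nu - nut) B =
      ⨆ n : ℕ, OuterMeasure.mkMetric'.pre
        (fun A : Set X => Metric.ediam A ^ (nu - nut)) (n : ENNReal)⁻¹ B := by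
    intro B
    rw [Measure.hausdorffMeasure, ← OuterMeasure.coe_mkMetric, OuterMeasure.mkMetric,
      OuterMeasure.mkMetric'.eq_iSup_nat, OuterMeasure.iSup_apply]
  have hY : ∀ B : Set Y, Measure.hausdorffMeasure nut B =
      ⨆ n : ℕ, OuterMeasure.mkMetric'.pre
        (fun A : Set Y => Metric.ediam A ^ nut) (n : ENNReal)⁻¹ B := by
    intro B
    rw [Measure.hausdorffMeasure, ← OuterMeasure.coe_mkMetric, OuterMeasure.mkMetric,
      OuterMeasure.mkMetric'.eq_iSup_nat, OuterMeasure.iSup_apply]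
  have hae : (fun t => Measure.hausdorffMeasure (nu - nut) (φ ⁻¹' {t} ∩ A))
      =ᵐ[(Measure.hausdorffMeasure nut : Measure Y)] fun _ => 0 := by
    let B : ℕ → Set Y := fun m =>
      {t | (((m + 1 : NNReal)⁻¹ : NNReal) : ENNReal) ≤ OuterMeasure.mkMetric'.pre
        (fun A : Set X => Metric.ediam A ^ (nu - nut)) (((m + 1 : NNReal)⁻¹ : NNReal) : ENNReal)
          (φ ⁻¹' {t} ∩ A)}
    have hB : ∀ m, Measure.hausdorffMeasure nut (B m) = 0 := by
      intro m
      rw [hY]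
      refine ENNReal.iSup_eq_zero.2 fun n => ?_
      exact slice_null φ K hφ nu nut hnut hle A hA _ _ (by positivity) (by positivity) _ (by simp)
    have hU : Measure.hausdorffMeasure nut (⋃ m, B m) = 0 := measure_iUnion_null hB
    refine measure_mono_null ?_ hU
    intro t ht
    have ht' : Measure.hausdorffMeasure (nu - nut) (φ ⁻¹' {t} ∩ A) ≠ 0 := ht
    rw [hX] at ht'
    have : ∃ n : ℕ, OuterMeasure.mkMetric'.pre
        (fun A : Set X => Metric.ediam A ^ (nu - nut)) (n : ENNReal)⁻¹ (φ ⁻¹' {t} ∩ A) ≠ 0 := by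
      by_contra hcon
      push Not at hcon
      exact ht' (ENNReal.iSup_eq_zero.2 hcon)
    obtain ⟨n, hn⟩ := this
    obtain ⟨k, hk⟩ := ENNReal.exists_inv_nat_lt hn
    refine Set.mem_iUnion.2 ⟨max n k, ?_⟩
    have hcast : ((((max n k : ℕ) + 1 : NNReal)⁻¹ : NNReal) : ENNReal)
        = (((max n k + 1 : ℕ)) : ENNReal)⁻¹ := by
      rw [← Nat.cast_succ, ENNReal.coe_inv (by positivity), ENNReal.coe_natCast]
    simp only [B, Set.mem_ofPred_eq]
    rw [hcast]
    have h1 : (((max n k + 1 : ℕ)) : ENNReal)⁻¹ ≤ (n : ENNReal)⁻¹ := by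
      rw [ENNReal.inv_le_inv]
      exact_mod_cast (le_max_left n k).trans (Nat.le_succ _)
    have h2 : (((max n k + 1 : ℕ)) : ENNReal)⁻¹ ≤ (k : ENNReal)⁻¹ := by
      rw [ENNReal.inv_le_inv]
      exact_mod_cast (le_max_right n k).trans (Nat.le_succ _)
    exact (h2.trans hk.le).trans (OuterMeasure.mkMetric'.mono_pre _ h1 _)
  rw [lintegral_congr_ae hae, lintegral_zero]
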